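/- arXiv:1412.3868 — 3 statements merged into one kernel-verified Lean document; each statement's English description precedes it below -/
import Mathlib

section
/- Let r be a relation on a finite set V (a directed graph), and define an equivalence relation ∼ on V by i ∼ j if and only if i reaches j and j reaches i under the reflexive-transitive closure of r. Call an equivalence class C a source class if every edge (u,v) with v ∈ C satisfies u ∈ C (no incoming edges from outside C). Then for a subset S ⊆ V, every vertex v ∈ V is reachable from some element of S (i.e., for every v there exists s ∈ S with s reaching v under the reflexive-transitive closure of r) if and only if S ∩ C ≠ ∅ for every source class C. -/
/-!
A source class is closed under predecessors, so any `s` reaching one of its members already lies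
in it; this gives the forward direction. Conversely, strict reachability (`a` reaches `b` but not
vice versa) is transitive and irreflexive, hence well-founded on a finite set. A minimal vertex `m`
among those reaching `v` has a source class as its component, since every predecessor of a vertex
of that component also reaches `v` and so, by minimality, is reached from `m`. An element of `S` in
this component then reaches `m`, and through it `v`.
-/

/-- In a finite directed graph `r` on `V`, with `∼` the mutual-reachability
equivalence (strongly connected components), every vertex is reachable from `S` iff `S`
intersects every source class (component with no incoming edge from outside). -/
theorem reachable_from_iff_meets_source_classes {V : Type*} [Fintype V]
    (r : V → V → Prop) (S : Set V) :
    (∀ v : V, ∃ s ∈ S, Relation.ReflTransGen r s v) ↔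
      (∀ C : Set V,
        (∃ i : V, C = {j | Relation.ReflTransGen r i j ∧ Relation.ReflTransGen r j i}) →
        (∀ u v : V, r u v → v ∈ C → u ∈ C) →
        (S ∩ C).Nonempty) := by
  constructor
  · rintro h C ⟨i, rfl⟩ hC
    obtain ⟨s, hs, hsi⟩ := h i
    refine ⟨s, hs, ?_⟩
    clear hs
    induction hsi using Relation.ReflTransGen.head_induction_on with
    | refl => exact ⟨.refl, .refl⟩
    | head hab _ ih => exact hC _ _ hab ih
  · intro h v
    let lt : V → V → Prop := fun a b =>
      Relation.ReflTransGen r a b ∧ ¬ Relation.ReflTransGen r b a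
    haveI : IsTrans V lt := ⟨fun _ _ _ hab hbc =>
      ⟨hab.1.trans hbc.1, fun hca => hab.2 (hbc.1.trans hca)⟩⟩
    haveI : Std.Irrefl lt := ⟨fun _ ha => ha.2 ha.1⟩
    obtain ⟨m, hmv, hmin⟩ := (Finite.wellFounded_of_trans_of_irrefl lt).has_min
      {u | Relation.ReflTransGen r u v} ⟨v, .refl⟩
    obtain ⟨s, hs, -, hsm⟩ := h _ ⟨m, rfl⟩ (by
      rintro u w huw ⟨-, hwm⟩
      have hum : Relation.ReflTransGen r u m := .head huw hwm
      refine ⟨?_, hum⟩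
      by_contra hmu
      exact hmin u (hum.trans hmv) ⟨hum, hmu⟩)
    exact ⟨s, hs, hsm.trans hmv⟩
end

section
/- Let V be a finite set, let f : 2^V → ℝ be monotone and submodular with f(∅) = 0, let M be a matroid on V with rank function rk, let r be a relation on V, and let η ≥ 0. Define g(S) = f(S) + η·( rk(V \ S) + |S| + |{ v ∈ V : there exists s ∈ S with v reaching s under the reflexive-transitive closure of r }| ). Let k ≥ 1 and let S₀ = ∅, S_i = S_{i−1} ∪ {v_i} for i = 1,…,k, where at each step v_i ∈ V \ S_{i−1} is chosen to maximize g(S_{i−1} ∪ {v}) over v ∈ V \ S_{i−1}. Then g(S_k) ≥ (1 − 1/e) · g(T) for every T ⊆ V with |T| ≤ k. -/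
/-!
The function `g` is monotone, submodular and satisfies `g ∅ ≥ 0`, and the classical analysis of
the greedy algorithm (Nemhauser, Wolsey, Fisher) applies to any such function.

* `S ↦ rk (V \ S)` is submodular because the rank function is submodular (`Matroid.eRk_submod`) and
  complementation exchanges unions and intersections. It is not monotone, but `rk (V \ S) + |S|` is:
  deleting `|B \ A|` elements from `V \ A` lowers the rank by at most `|B \ A|`
  (`matroidRank_le_add_ncard`).
* The number of vertices reaching `S` is a coverage function, hence monotone and submodular: what
  `v` newly contributes to `S` is the set of vertices that reach `v` and do not reach `S`, which
  shrinks as `S` grows.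

For the greedy analysis, submodularity bounds the gap `g T - g (S i)` by at most `k` times the best
single gain `g (S (i + 1)) - g (S i)` (`le_add_ncard_mul`). So every step multiplies the gap
by at most `1 - 1 / k`, and after `k` steps it is at most `(1 - 1 / k) ^ k * (g T - g ∅) ≤ g T / e`
(`greedy_bound`).
-/

/-- The rank function of a matroid: the size of a largest independent subset of `X`. -/
noncomputable def matroidRank {α : Type*} (M : Matroid α) (X : Set α) : ℕ :=
  sSup {k : ℕ | ∃ I : Set α, I ⊆ X ∧ M.Indep I ∧ I.ncard = k}

theorem matroidRank_cast_eq_eRk {V : Type*} [Finite V] (M : Matroid V) (X : Set V) :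
    (matroidRank M X : ℕ∞) = M.eRk X := by
  obtain ⟨I, hI⟩ := M.exists_isBasis' X
  have hle : ∀ n ∈ {k : ℕ | ∃ I : Set V, I ⊆ X ∧ M.Indep I ∧ I.ncard = k}, n ≤ I.ncard := by
    rintro n ⟨J, hJX, hJ, rfl⟩
    have h := hJ.encard_le_eRk_of_subset hJX
    rw [← hI.encard_eq_eRk, ← J.toFinite.cast_ncard_eq, ← I.toFinite.cast_ncard_eq] at h
    exact_mod_cast h
  have hmem : I.ncard ∈ {k : ℕ | ∃ I : Set V, I ⊆ X ∧ M.Indep I ∧ I.ncard = k} :=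
    ⟨I, hI.subset, hI.indep, rfl⟩
  have : matroidRank M X = I.ncard :=
    le_antisymm (csSup_le ⟨_, hmem⟩ hle) (le_csSup ⟨_, hle⟩ hmem)
  rw [this, I.toFinite.cast_ncard_eq, hI.encard_eq_eRk]

theorem matroidRank_submod {V : Type*} [Finite V] (M : Matroid V) (X Y : Set V) :
    matroidRank M (X ∩ Y) + matroidRank M (X ∪ Y) ≤ matroidRank M X + matroidRank M Y := by
  have h := M.eRk_submod X Y
  simp only [← matroidRank_cast_eq_eRk] at h
  exact_mod_cast h

theorem matroidRank_le_add_ncard {V : Type*} [Finite V] (M : Matroid V) {X Y D : Set V}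
    (h : X ⊆ Y ∪ D) : matroidRank M X ≤ matroidRank M Y + D.ncard := by
  have h1 := (M.eRk_mono h).trans (M.eRk_union_le_eRk_add_encard Y D)
  rw [← matroidRank_cast_eq_eRk, ← matroidRank_cast_eq_eRk, ← D.toFinite.cast_ncard_eq] at h1
  exact_mod_cast h1

theorem matroidRank_compl_marginal {V : Type*} [Finite V] (M : Matroid V) {A B : Set V}
    (hAB : A ⊆ B) {v : V} (hv : v ∉ B) :
    matroidRank M (Set.univ \ insert v B) + matroidRank M (Set.univ \ A) ≤
      matroidRank M (Set.univ \ insert v A) + matroidRank M (Set.univ \ B) := by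
  have h := matroidRank_submod M (Set.univ \ insert v A) (Set.univ \ B)
  have h1 : (Set.univ \ insert v A) ∩ (Set.univ \ B) = Set.univ \ insert v B := by
    ext x
    have := @hAB x
    simp only [Set.mem_inter_iff, Set.mem_diff, Set.mem_univ, Set.mem_insert_iff, true_and]
    tauto
  have h2 : (Set.univ \ insert v A) ∪ (Set.univ \ B) = Set.univ \ A := by
    ext x
    have := @hAB x
    by_cases hx : x = v
    · subst hx
      simp only [Set.mem_union, Set.mem_diff, Set.mem_univ, Set.mem_insert_iff, true_and]
      tauto
    · simp only [Set.mem_union, Set.mem_diff, Set.mem_univ, Set.mem_insert_iff, true_and]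
      tauto
  rwa [h1, h2] at h

/-- The coverage count `S ↦ |{v : v is related to some s ∈ S}|` has decreasing marginal gains. -/
theorem coverage_marginal {V : Type*} [Finite V] (R : V → V → Prop) {A B : Set V}
    (hAB : A ⊆ B) (v : V) :
    {x | ∃ s ∈ insert v B, R x s}.ncard + {x | ∃ s ∈ A, R x s}.ncard ≤
      {x | ∃ s ∈ insert v A, R x s}.ncard + {x | ∃ s ∈ B, R x s}.ncard := by
  have key := Set.ncard_union_add_ncard_inter
    {x | ∃ s ∈ insert v A, R x s} {x | ∃ s ∈ B, R x s} (Set.toFinite _) (Set.toFinite _)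
  have h1 : {x | ∃ s ∈ insert v B, R x s}.ncard ≤
      ({x | ∃ s ∈ insert v A, R x s} ∪ {x | ∃ s ∈ B, R x s}).ncard := by
    refine Set.ncard_le_ncard ?_ (Set.toFinite _)
    rintro x ⟨s, rfl | hs, hx⟩
    · exact Or.inl ⟨s, Set.mem_insert _ _, hx⟩
    · exact Or.inr ⟨s, hs, hx⟩
  have h2 : {x | ∃ s ∈ A, R x s}.ncard ≤
      ({x | ∃ s ∈ insert v A, R x s} ∩ {x | ∃ s ∈ B, R x s}).ncard := by
    refine Set.ncard_le_ncard ?_ (Set.toFinite _)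
    rintro x ⟨s, hs, hx⟩
    exact ⟨⟨s, Set.mem_insert_of_mem _ hs, hx⟩, ⟨s, hAB hs, hx⟩⟩
  omega

/-- If every single element adds at most `c` to `A`, then a set `T` adds at most `|T| * c`. -/
theorem le_add_ncard_mul {V : Type*} [Finite V] (g : Set V → ℝ)
    (hsub : ∀ A B : Set V, A ⊆ B → ∀ v ∉ B, g (insert v B) - g B ≤ g (insert v A) - g A)
    (A : Set V) (c : ℝ) (hc : 0 ≤ c) (hA : ∀ w ∉ A, g (insert w A) - g A ≤ c) (T : Set V) :
    g (A ∪ T) ≤ g A + T.ncard * c := by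
  induction T, T.toFinite using Set.Finite.induction_on with
  | empty => simp
  | @insert t T ht _ ih =>
    rw [Set.ncard_insert_of_notMem ht, Set.union_insert]
    push_cast
    by_cases h : t ∈ A ∪ T
    · rw [Set.insert_eq_of_mem h]
      linarith
    · have h1 := hsub A (A ∪ T) Set.subset_union_left t h
      have h2 := hA t fun h' => h (Or.inl h')
      linarith

/-- The greedy guarantee for a monotone submodular `g` with `g ∅ ≥ 0`. -/
theorem greedy_bound {V : Type*} [Finite V] (g : Set V → ℝ) (h0 : 0 ≤ g ∅)
    (hmono : ∀ A B : Set V, A ⊆ B → g A ≤ g B)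
    (hsub : ∀ A B : Set V, A ⊆ B → ∀ v ∉ B, g (insert v B) - g B ≤ g (insert v A) - g A)
    (k : ℕ) (hk : 1 ≤ k) (S : ℕ → Set V) (hS0 : S 0 = ∅)
    (hstep : ∀ i < k, ∃ v, v ∉ S i ∧ S (i + 1) = insert v (S i) ∧
      ∀ w ∉ S i, g (insert w (S i)) ≤ g (insert v (S i)))
    (T : Set V) (hT : T.ncard ≤ k) : (1 - 1 / Real.exp 1) * g T ≤ g (S k) := by
  have hk0 : (0 : ℝ) < k := by exact_mod_cast hk
  have hk1 : (1 : ℝ) / k ≤ 1 := by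
    rw [div_le_one hk0]
    exact_mod_cast hk
  have hq : (0 : ℝ) ≤ 1 - 1 / k := by linarith
  have hTk : (T.ncard : ℝ) ≤ k := by exact_mod_cast hT
  have hstep' : ∀ i < k, g T - g (S (i + 1)) ≤ (1 - 1 / k) * (g T - g (S i)) := by
    intro i hi
    obtain ⟨v, -, hS, hmax⟩ := hstep i hi
    rw [← hS] at hmax
    have hc : 0 ≤ g (S (i + 1)) - g (S i) := by
      rw [hS]
      linarith [hmono _ _ (Set.subset_insert v (S i))]
    have h1 := le_add_ncard_mul g hsub (S i) _ hc
      (fun w hw => by linarith [hmax w hw]) T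
    have h2 := hmono T (S i ∪ T) Set.subset_union_right
    have h3 := mul_le_mul_of_nonneg_right hTk hc
    have h4 : (g T - g (S i)) / k ≤ g (S (i + 1)) - g (S i) := by
      rw [div_le_iff₀ hk0]
      linarith
    have h5 : (1 - 1 / (k : ℝ)) * (g T - g (S i)) =
        (g T - g (S i)) - (g T - g (S i)) / k := by ring
    linarith
  have hind : ∀ i ≤ k, g T - g (S i) ≤ (1 - 1 / k) ^ i * g T := by
    intro i
    induction i with
    | zero =>
      intro _
      rw [hS0]
      linarith
    | succ i ih =>
      intro hi
      have h1 := mul_le_mul_of_nonneg_left (ih (by omega)) hq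
      have h2 := hstep' i (by omega)
      rw [pow_succ']
      linarith
  have hgT : 0 ≤ g T := h0.trans (hmono _ _ (Set.empty_subset T))
  have he : (1 - 1 / (k : ℝ)) ^ k ≤ 1 / Real.exp 1 := by
    have := Real.one_sub_div_pow_le_exp_neg (n := k) (t := 1) (by exact_mod_cast hk)
    rwa [Real.exp_neg, ← one_div] at this
  have := mul_le_mul_of_nonneg_right he hgT
  linarith [hind k le_rfl]


/-- Greedy maximization of
`g(S) = f(S) + η(rk(V\S) + |S| + |{v : v reaches S}|)`, where `f` is monotone
submodular with `f(∅) = 0`, achieves a `(1 − 1/e)` approximation over all `T` with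
`|T| ≤ k`. -/
theorem greedy_performance_controllability_bound {V : Type*} [Fintype V]
    (f : Set V → ℝ) (hf0 : f ∅ = 0)
    (hmono : ∀ A B : Set V, A ⊆ B → f A ≤ f B)
    (hsub : ∀ A B : Set V, A ⊆ B → ∀ v ∉ B,
      f (insert v A) - f A ≥ f (insert v B) - f B)
    (M : Matroid V) (hE : M.E = Set.univ)
    (r : V → V → Prop)
    (η : ℝ) (hη : 0 ≤ η)
    (g : Set V → ℝ)
    (hg : ∀ S : Set V, g S = f S + η *
      ((matroidRank M (Set.univ \ S) : ℝ) + (S.ncard : ℝ) +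
        (({v : V | ∃ s ∈ S, Relation.ReflTransGen r v s}).ncard : ℝ)))
    (k : ℕ) (hk : 1 ≤ k)
    (S : ℕ → Set V) (hS0 : S 0 = ∅)
    (hstep : ∀ i < k, ∃ v, v ∉ S i ∧ S (i + 1) = insert v (S i) ∧
      ∀ w ∉ S i, g (insert w (S i)) ≤ g (insert v (S i))) :
    ∀ T : Set V, T.ncard ≤ k → (1 - 1 / Real.exp 1) * g T ≤ g (S k) := by
  have h0 : 0 ≤ g ∅ := by
    rw [hg, hf0, zero_add]
    positivity
  have hgmono : ∀ A B : Set V, A ⊆ B → g A ≤ g B := by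
    intro A B hAB
    rw [hg, hg]
    refine add_le_add (hmono A B hAB) (mul_le_mul_of_nonneg_left ?_ hη)
    have h1 : matroidRank M (Set.univ \ A) ≤
        matroidRank M (Set.univ \ B) + (B \ A).ncard := by
      refine matroidRank_le_add_ncard M fun x hx => ?_
      by_cases hxB : x ∈ B
      · exact Or.inr ⟨hxB, hx.2⟩
      · exact Or.inl ⟨trivial, hxB⟩
    have h2 := Set.ncard_sdiff_add_ncard_of_subset hAB
    have h3 : {v : V | ∃ s ∈ A, Relation.ReflTransGen r v s}.ncard ≤
        {v : V | ∃ s ∈ B, Relation.ReflTransGen r v s}.ncard :=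
      Set.ncard_le_ncard (fun x ⟨s, hs, hx⟩ => ⟨s, hAB hs, hx⟩) (Set.toFinite _)
    norm_cast
    omega
  have hgsub : ∀ A B : Set V, A ⊆ B → ∀ v ∉ B,
      g (insert v B) - g B ≤ g (insert v A) - g A := by
    intro A B hAB v hv
    have h1 := hsub A B hAB v hv
    have h2 := matroidRank_compl_marginal M hAB hv
    have h3 := coverage_marginal (Relation.ReflTransGen r) hAB v
    have h4 := Set.ncard_insert_of_notMem hv
    have h5 := Set.ncard_insert_of_notMem fun h => hv (hAB h)
    simp only [hg]
    rify at h2 h3 h4 h5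
    rw [h4, h5]
    have h6 := mul_le_mul_of_nonneg_left (add_le_add h2 h3) hη
    linarith
  exact greedy_bound g h0 hgmono hgsub k hk S hS0 hstep
end

section
/- Let V be a finite set with |V| = n and let f : 2^V → ℝ be monotone and submodular. For y ∈ [0,1]^V define the multilinear relaxation F(y) = Σ_{S ⊆ V} f(S)·(Π_{i ∈ S} y_i)·(Π_{i ∉ S} (1 − y_i)), and for j ∈ V define the expected marginal gain E_y[f_R(j)] = Σ_{S ⊆ V} (f(S ∪ {j}) − f(S))·(Π_{i ∈ S} y_i)·(Π_{i ∉ S} (1 − y_i)). Then for every set S* ⊆ V, f(S*) ≤ F(y) + Σ_{j ∈ S*} E_y[f_R(j)]. -/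
/-! For a fixed `S`, adding the elements of `Sstar` to `S` one at a time and applying
diminishing returns at each step gives
`f Sstar ≤ f (Sstar ∪ S) ≤ f S + ∑ j ∈ Sstar, (f (insert j S) - f S)`
(`le_add_sum_marginal`). The weights `(∏ i ∈ S, y i) * ∏ i ∈ Sᶜ, (1 - y i)` are nonnegative
and, expanding `∏ i, (y i + (1 - y i))`, sum to `1`, so averaging the pointwise inequality over
`S` gives the result. -/

theorem union_le_add_sum_marginal {V : Type*} [DecidableEq V] (f : Finset V → ℝ)
    (hmono : ∀ A B : Finset V, A ⊆ B → f A ≤ f B)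
    (hsub : ∀ A B : Finset V, A ⊆ B → ∀ v ∉ B,
      f (insert v A) - f A ≥ f (insert v B) - f B)
    (S T : Finset V) :
    f (T ∪ S) ≤ f S + ∑ j ∈ T, (f (insert j S) - f S) := by
  induction T using Finset.induction_on with
  | empty => simp
  | insert a T ha ih =>
    rw [Finset.sum_insert ha, Finset.insert_union]
    by_cases h : a ∈ T ∪ S
    · -- Here `hsub` does not apply; the marginal of `a` is nonnegative by monotonicity.
      rw [Finset.insert_eq_of_mem h]
      linarith [hmono S (insert a S) (Finset.subset_insert a S)]
    · linarith [hsub S (T ∪ S) Finset.subset_union_right a h]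

theorem le_add_sum_marginal {V : Type*} [DecidableEq V] (f : Finset V → ℝ)
    (hmono : ∀ A B : Finset V, A ⊆ B → f A ≤ f B)
    (hsub : ∀ A B : Finset V, A ⊆ B → ∀ v ∉ B,
      f (insert v A) - f A ≥ f (insert v B) - f B)
    (S T : Finset V) :
    f T ≤ f S + ∑ j ∈ T, (f (insert j S) - f S) :=
  (hmono T (T ∪ S) Finset.subset_union_left).trans
    (union_le_add_sum_marginal f hmono hsub S T)

/-- For a monotone submodular `f` on a finite set `V` and `y ∈ [0,1]^V`,
with `F(y)` the multilinear relaxation and `E_y[f_R(j)]` the expected marginal gain of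
`j`, one has `f(S*) ≤ F(y) + Σ_{j ∈ S*} E_y[f_R(j)]` for every `S* ⊆ V`. -/
theorem multilinear_relaxation_bound {V : Type*} [Fintype V] [DecidableEq V]
    (f : Finset V → ℝ)
    (hmono : ∀ A B : Finset V, A ⊆ B → f A ≤ f B)
    (hsub : ∀ A B : Finset V, A ⊆ B → ∀ v ∉ B,
      f (insert v A) - f A ≥ f (insert v B) - f B)
    (y : V → ℝ) (hy : ∀ i : V, 0 ≤ y i ∧ y i ≤ 1)
    (Sstar : Finset V) :
    f Sstar ≤
      (∑ S : Finset V, f S * (∏ i ∈ S, y i) * ∏ i ∈ Sᶜ, (1 - y i))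
      + ∑ j ∈ Sstar, ∑ S : Finset V,
          (f (insert j S) - f S) * (∏ i ∈ S, y i) * ∏ i ∈ Sᶜ, (1 - y i) := by
  have hone : ∑ S : Finset V, (∏ i ∈ S, y i) * ∏ i ∈ Sᶜ, (1 - y i) = 1 := by
    rw [← Fintype.prod_add]
    simp
  have hnonneg (S : Finset V) : 0 ≤ (∏ i ∈ S, y i) * ∏ i ∈ Sᶜ, (1 - y i) :=
    mul_nonneg (Finset.prod_nonneg fun i _ => (hy i).1)
      (Finset.prod_nonneg fun i _ => sub_nonneg.2 (hy i).2)
  calc f Sstar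
      = ∑ S : Finset V, f Sstar * ((∏ i ∈ S, y i) * ∏ i ∈ Sᶜ, (1 - y i)) := by
        rw [← Finset.mul_sum, hone, mul_one]
    _ ≤ ∑ S : Finset V, (f S + ∑ j ∈ Sstar, (f (insert j S) - f S)) *
          ((∏ i ∈ S, y i) * ∏ i ∈ Sᶜ, (1 - y i)) :=
        Finset.sum_le_sum fun S _ => mul_le_mul_of_nonneg_right
          (le_add_sum_marginal f hmono hsub S Sstar) (hnonneg S)
    _ = _ := by
        rw [Finset.sum_comm, ← Finset.sum_add_distrib]
        refine Finset.sum_congr rfl fun S _ => ?_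
        simp only [add_mul, Finset.sum_mul, mul_assoc]
end
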